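/- Strong-coupling asymptotics of the lowest magnetic eigenvalue: let B ≠ 0, d > 0, b ∈ (0,d). For every α ∈ ℝ there is a unique z = ε₀(α) < |B| + (π/d)² (the bottom of Σ_B) with ξ_B(b,z) = α, and ε₀(α) = −16π²α²·(1 + O(α^{−1})) as α → −∞; in particular the leading term is independent of B and coincides with the non-magnetic strong-coupling asymptotics. -/

import Mathlib

open Real Filter Topology Asymptotics

/-- The digamma function `ψ = Γ'/Γ`. -/
noncomputable def digamma (x : ℝ) : ℝ := deriv Real.Gamma x / Real.Gamma x

/-- The set of Landau–transverse levels
`Σ_B = {|B|(2m+1) + (πn/d)² : m ∈ ℤ_{≥0}, n ∈ ℤ_{≥1}}` of the free magnetic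
Hamiltonian in a Dirichlet layer of width `d`. -/
def landauLevels (B d : ℝ) : Set ℝ :=
  {x | ∃ m n : ℕ, x = |B| * (2 * (m : ℝ) + 1) + (π * ((n : ℝ) + 1) / d) ^ 2}

/-- The `n`-th term (for `n+1`-st transverse mode) of the series defining the
magnetic regularized Green's function:
`t_n = ln((πn)²/(2|B|d²)) − ψ((|B| − z + (πn/d)²)/(2|B|))`. -/
noncomputable def magTerm (B d z : ℝ) (n : ℕ) : ℝ :=
  Real.log ((π * ((n : ℝ) + 1)) ^ 2 / (2 * |B| * d ^ 2)) -
    digamma ((|B| - z + (π * ((n : ℝ) + 1) / d) ^ 2) / (2 * |B|))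

/-- The magnetic regularized Green's function `ξ_B(b,z)` of a point interaction at
height `b ∈ (0,d)` in the Dirichlet layer of width `d` with homogeneous magnetic
field of strength `B`. -/
noncomputable def xiB (B d b z : ℝ) : ℝ :=
  (1 / (2 * π * d)) * ∑' n : ℕ, magTerm B d z n * Real.sin (π * ((n : ℝ) + 1) * b / d) ^ 2
    + (1 / (4 * π * d)) *
      (Real.eulerMascheroniConstant + digamma (b / d) + (π / 2) * Real.cot (π * b / d))

lemma dig_diff {x : ℝ} (hx : 0 < x) : DifferentiableAt ℝ Real.Gamma x :=
  Real.differentiableAt_Gamma (fun m => by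
    have : (0:ℝ) ≤ m := Nat.cast_nonneg m
    linarith)

lemma dig_hasDeriv {x : ℝ} (hx : 0 < x) :
    HasDerivAt (Real.log ∘ Real.Gamma) (digamma x) x :=
  (dig_diff hx).hasDerivAt.log (Real.Gamma_pos_of_pos hx).ne'

lemma dig_mono : MonotoneOn digamma (Set.Ioi 0) := by
  have h := Real.convexOn_log_Gamma.monotoneOn_deriv
    (fun x hx => (dig_hasDeriv hx).differentiableAt)
  intro x hx y hy hxy
  have := h hx hy hxy
  rwa [(dig_hasDeriv hx).deriv, (dig_hasDeriv hy).deriv] at this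

lemma dig_add_one {x : ℝ} (hx : 0 < x) : digamma (x + 1) = digamma x + 1 / x := by
  have h1 : HasDerivAt (fun y => (Real.log ∘ Real.Gamma) (y + 1)) (digamma (x + 1)) x :=
    (dig_hasDeriv (by linarith : 0 < x + 1)).comp_add_const x 1
  have h2 : HasDerivAt (fun y => Real.log y + (Real.log ∘ Real.Gamma) y)
      (x⁻¹ + digamma x) x := (Real.hasDerivAt_log hx.ne').add (dig_hasDeriv hx)
  have h3 : (fun y => (Real.log ∘ Real.Gamma) (y + 1)) =ᶠ[𝓝 x]
      (fun y => Real.log y + (Real.log ∘ Real.Gamma) y) := by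
    filter_upwards [lt_mem_nhds hx] with y hy
    simp only [Function.comp]
    rw [Real.Gamma_add_one hy.ne', Real.log_mul hy.ne' (Real.Gamma_pos_of_pos hy).ne']
  have := h1.unique (h2.congr_of_eventuallyEq h3)
  rw [this, one_div, add_comm]

lemma logGamma_slope {x : ℝ} (hx : 0 < x) :
    slope (Real.log ∘ Real.Gamma) x (x + 1) = Real.log x := by
  rw [slope_def_field]
  simp only [Function.comp]
  rw [Real.Gamma_add_one hx.ne', Real.log_mul hx.ne' (Real.Gamma_pos_of_pos hx).ne']
  simp

lemma dig_le_log {x : ℝ} (hx : 0 < x) : digamma x ≤ Real.log x := by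
  have := Real.convexOn_log_Gamma.le_slope_of_hasDerivAt (x := x) (y := x + 1) hx
    (by simp only [Set.mem_Ioi]; linarith) (by linarith) (dig_hasDeriv hx)
  rwa [logGamma_slope hx] at this

lemma log_le_dig {x : ℝ} (hx : 0 < x) : Real.log x ≤ digamma x + 1 / x := by
  have h1 : 0 < x + 1 := by linarith
  have := Real.convexOn_log_Gamma.slope_le_of_hasDerivAt (x := x) (y := x + 1) hx
    h1 (by linarith) (dig_hasDeriv h1)
  rwa [logGamma_slope hx, dig_add_one hx] at this

lemma dig_strict {x y : ℝ} (hx : 0 < x) (hxy : x < y) : digamma x < digamma y := by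
  have hy : 0 < y := hx.trans hxy
  have h1 := dig_mono hx hy hxy.le
  have h2 := dig_mono (show x + 1 ∈ Set.Ioi (0:ℝ) by simp only [Set.mem_Ioi]; linarith)
    (show y + 1 ∈ Set.Ioi (0:ℝ) by simp only [Set.mem_Ioi]; linarith) (by linarith)
  rw [dig_add_one hx, dig_add_one hy] at h2
  have := one_div_lt_one_div_of_lt hx hxy
  linarith

lemma dig_cont {x : ℝ} (hx : 0 < x) : ContinuousAt digamma x := by
  have hd : ∀ s : ℂ, 0 < s.re → DifferentiableAt ℂ Complex.Gamma s := fun s hs =>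
    Complex.differentiableAt_Gamma s (fun m h => by
      rw [h] at hs
      simp at hs
      have : (0:ℝ) ≤ m := Nat.cast_nonneg m
      linarith)
  have hopen : IsOpen {s : ℂ | 0 < s.re} := isOpen_lt continuous_const Complex.continuous_re
  have hD : DifferentiableOn ℂ Complex.Gamma {s : ℂ | 0 < s.re} :=
    fun s hs => (hd s hs).differentiableWithinAt
  have hD2 := (hD.deriv hopen).differentiableAt (x := (x:ℂ)) (hopen.mem_nhds (by simpa using hx))
  have hc : ContinuousAt (fun y : ℝ => (deriv Complex.Gamma (y:ℂ)).re) x :=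
    Complex.continuous_re.continuousAt.comp
      (ContinuousAt.comp (f := fun y : ℝ => (y:ℂ)) hD2.continuousAt Complex.continuous_ofReal.continuousAt)
  have he : (fun y : ℝ => (deriv Complex.Gamma (y:ℂ)).re) =ᶠ[𝓝 x] deriv Real.Gamma := by
    filter_upwards [lt_mem_nhds hx] with y hy
    have h := (hd (y:ℂ) (by simpa using hy)).hasDerivAt.real_of_complex
    have h2 : HasDerivAt Real.Gamma (deriv Complex.Gamma (y:ℂ)).re y := h
    exact h2.deriv.symm
  exact (hc.congr he).div (dig_diff hx).continuousAt (Real.Gamma_pos_of_pos hx).ne'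


noncomputable def gg (s : ℝ) (n : ℕ) : ℝ := Real.log (1 + s ^ 2 / ((n:ℝ) + 1) ^ 2)

lemma gg_nonneg (s : ℝ) (n : ℕ) : 0 ≤ gg s n :=
  Real.log_nonneg (by have : 0 ≤ s ^ 2 / ((n:ℝ) + 1) ^ 2 := by positivity
                      linarith)

lemma summable_inv_sq : Summable (fun n : ℕ => 1 / ((n:ℝ) + 1) ^ 2) := by
  have h := (summable_nat_add_iff 1).2 (Real.summable_one_div_nat_pow.2 (by norm_num : 1 < 2))
  simpa using h

lemma gg_summable (s : ℝ) : Summable (gg s) := by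
  refine Summable.of_nonneg_of_le (gg_nonneg s) (fun n => ?_) (summable_inv_sq.mul_left (s ^ 2))
  have h : 0 ≤ s ^ 2 / ((n:ℝ) + 1) ^ 2 := by positivity
  have := Real.log_le_sub_one_of_pos (show 0 < 1 + s ^ 2 / ((n:ℝ) + 1) ^ 2 by linarith)
  unfold gg
  calc _ ≤ _ := this
    _ = _ := by ring

lemma gg_tsum {s : ℝ} (hs : 0 < s) :
    ∑' n, gg s n = Real.log (Real.sinh (π * s)) - Real.log (π * s) := by
  have h1 := (gg_summable s).hasSum.tendsto_sum_nat
  have h2 := Complex.tendsto_euler_sin_prod ((s:ℂ) * Complex.I)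
  have hps : 0 < π * s := by positivity
  have hS : 0 < Real.sinh (π * s) := Real.sinh_pos_iff.2 hps
  have h3 : Tendsto (fun n : ℕ => π * s * ∏ j ∈ Finset.range n, (1 + s ^ 2 / ((j:ℝ) + 1) ^ 2))
      atTop (𝓝 (Real.sinh (π * s))) := by
    have h4 := (h2.mul_const (-Complex.I))
    have h5 := Complex.continuous_re.continuousAt.tendsto.comp h4
    have e1 : (Complex.sin (↑π * (↑s * Complex.I)) * -Complex.I).re = Real.sinh (π * s) := by
      rw [← mul_assoc, Complex.sin_mul_I]
      have : Complex.sinh (↑π * ↑s) = ((Real.sinh (π * s) : ℝ) : ℂ) := by push_cast; rfl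
      rw [this]
      rw [mul_assoc, mul_neg, Complex.I_mul_I, neg_neg, mul_one, Complex.ofReal_re]
    rw [e1] at h5
    refine h5.congr (fun n => ?_)
    have e2 : ∀ j : ℕ, (1 - ((s:ℂ) * Complex.I) ^ 2 / ((j:ℂ) + 1) ^ 2)
        = ((1 + s ^ 2 / ((j:ℝ) + 1) ^ 2 : ℝ) : ℂ) := by
      intro j
      push_cast
      rw [mul_pow, Complex.I_sq]; ring
    simp only [Function.comp]
    simp_rw [e2]
    rw [← Complex.ofReal_prod]
    rw [show (↑π * (↑s * Complex.I) * ((∏ j ∈ Finset.range n, (1 + s ^ 2 / ((j:ℝ) + 1) ^ 2) : ℝ) : ℂ)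
      * -Complex.I) = ((π * s * ∏ j ∈ Finset.range n, (1 + s ^ 2 / ((j:ℝ) + 1) ^ 2) : ℝ) : ℂ) * (-(Complex.I * Complex.I)) by
        push_cast; ring]
    rw [Complex.I_mul_I, neg_neg, mul_one, Complex.ofReal_re]
  have h6 := (h3.log hS.ne').sub_const (Real.log (π * s))
  refine tendsto_nhds_unique h1 (h6.congr (fun n => ?_))
  have hp : ∀ j ∈ Finset.range n, (1 + s ^ 2 / ((j:ℝ) + 1) ^ 2) ≠ 0 := fun j _ => by positivity
  rw [Real.log_mul hps.ne' (Finset.prod_ne_zero_iff.2 hp), Real.log_prod hp]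
  simp [gg]

lemma log_sinh_bound {x : ℝ} (hx : 1 ≤ x) :
    |Real.log (Real.sinh x) - x| ≤ Real.log 4 := by
  have hS : 0 < Real.sinh x := Real.sinh_pos_iff.2 (by linarith)
  have he : Real.exp (-x) ≤ Real.exp x / 2 := by
    have h1 : x + 1 ≤ Real.exp x := Real.add_one_le_exp x
    rw [Real.exp_neg, inv_le_comm₀ (Real.exp_pos x) (by positivity)]
    rw [inv_div, div_le_iff₀ (Real.exp_pos x)]
    nlinarith
  have hp := Real.exp_pos (-x)
  have l4 : Real.log (Real.exp x / 4) = x - Real.log 4 := by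
    rw [Real.log_div (Real.exp_pos x).ne' (by norm_num), Real.log_exp]
  have lo : Real.log (Real.exp x / 4) ≤ Real.log (Real.sinh x) :=
    Real.log_le_log (by positivity) (by rw [Real.sinh_eq]; linarith)
  have hi : Real.log (Real.sinh x) ≤ Real.log (Real.exp x) :=
    Real.log_le_log hS (by rw [Real.sinh_eq]; linarith [Real.exp_pos x])
  rw [Real.log_exp] at hi
  have := Real.log_nonneg (show (1:ℝ) ≤ 4 by norm_num)
  rw [abs_le]; constructor <;> linarith

lemma gg_convex (s : ℝ) (n : ℕ) : 2 * gg s (n+1) ≤ gg s n + gg s (n+2) := by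
  unfold gg
  have p : ∀ m : ℕ, 0 < 1 + s ^ 2 / ((m:ℝ) + 1) ^ 2 := fun m => by positivity
  rw [← Real.log_mul (p _).ne' (p _).ne', two_mul, ← Real.log_mul (p _).ne' (p _).ne']
  refine Real.log_le_log (mul_pos (p _) (p _)) ?_
  have hn : (0:ℝ) ≤ n := Nat.cast_nonneg n
  push_cast
  generalize (n:ℝ) = m at hn
  have a1 : 2 / (m+1+1)^2 ≤ 1 / (m+1)^2 + 1/(m+2+1)^2 := by
    rw [div_add_div _ _ (by positivity) (by positivity), div_le_div_iff₀ (by positivity) (by positivity)]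
    nlinarith [pow_nonneg hn 2, pow_nonneg hn 3, pow_nonneg hn 4]
  have a2 : 1 / (m+1+1)^2 * (1 / (m+1+1)^2) ≤ 1 / (m+1)^2 * (1/(m+2+1)^2) := by
    rw [div_mul_div_comm, div_mul_div_comm]
    apply div_le_div_of_nonneg_left (by norm_num) (by positivity)
    rw [← mul_pow, ← mul_pow]
    apply pow_le_pow_left₀ (by positivity)
    nlinarith
  have s2 := sq_nonneg s
  have s4 := sq_nonneg (s^2)
  have b1 := mul_le_mul_of_nonneg_left a1 s2
  have b2 := mul_le_mul_of_nonneg_left a2 s4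
  calc _ = 1 + s^2 * (2 / (m+1+1)^2) + (s^2)^2 * (1 / (m+1+1)^2 * (1 / (m+1+1)^2)) := by ring
    _ ≤ 1 + s^2 * (1 / (m+1)^2 + 1/(m+2+1)^2) + (s^2)^2 * (1 / (m+1)^2 * (1/(m+2+1)^2)) := by linarith
    _ = _ := by ring

lemma cos_sum_bound (g : ℕ → ℝ) (hg0 : ∀ n, 0 ≤ g n) (hg : Summable g)
    (hc : ∀ n, 2 * g (n+1) ≤ g n + g (n+2)) (θ : ℝ) :
    |(2 - 2 * Real.cos θ) * (∑' n, g n * Real.cos (((n:ℝ)+1) * θ)) + (1 - Real.cos θ) * g 0|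
      ≤ 2 * (g 0 - g 1) := by
  set h : ℕ → ℝ := fun n => Real.cos ((n:ℝ) * θ) with hh
  have hb : ∀ n, |h n| ≤ 1 := fun n => Real.abs_cos_le_one _
  have sm : ∀ j k : ℕ, Summable (fun n => g (n+j) * h (n+k)) := fun j k => by
    refine Summable.of_norm_bounded ((summable_nat_add_iff j).2 hg) (fun n => ?_)
    rw [norm_mul, Real.norm_of_nonneg (hg0 _)]
    exact mul_le_of_le_one_right (hg0 _) (hb _)
  have sm02 : Summable (fun n => g n * h (n+2)) := sm 0 2
  have sm00 : Summable (fun n => g n * h n) := sm 0 0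
  have sg : ∀ j : ℕ, Summable (fun n => g (n+j)) := fun j => (summable_nat_add_iff j).2 hg
  have eA : ∑' n, g n * h (n+1) = g 0 * h 1 + ∑' n, g (n+1) * h (n+2) := by
    simpa using (sm 0 1).tsum_eq_zero_add
  have eQ : ∑' n, g n * h n = g 0 * h 0 + (g 1 * h 1 + ∑' n, g (n+2) * h (n+2)) := by
    have q1 := (sm 0 0).tsum_eq_zero_add
    have q2 := (sm 1 1).tsum_eq_zero_add
    simp only [add_zero, zero_add] at q1 q2
    rw [q1, q2]
  have eG1 : ∑' n, g n = g 0 + ∑' n, g (n+1) := hg.tsum_eq_zero_add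
  have eG2 : ∑' n, g (n+1) = g 1 + ∑' n, g (n+2) := (sg 1).tsum_eq_zero_add
  have hrec : ∀ n, 2 * Real.cos θ * h (n+1) = h (n+2) + h n := by
    intro n
    simp only [hh]
    push_cast
    rw [show ((n:ℝ)+2)*θ = ((n:ℝ)+1)*θ + θ by ring, show (n:ℝ)*θ = ((n:ℝ)+1)*θ - θ by ring,
      Real.cos_add, Real.cos_sub]
    ring
  have eP : 2 * Real.cos θ * ∑' n, g n * h (n+1) = ∑' n, g n * h (n+2) + ∑' n, g n * h n := by
    rw [← tsum_mul_left, ← Summable.tsum_add sm02 sm00]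
    refine tsum_congr (fun n => ?_)
    have := hrec n
    linear_combination g n * this
  set R := ∑' n, h (n+2) * (2 * g (n+1) - g n - g (n+2)) with hR
  have eR : R = 2 * ∑' n, g (n+1) * h (n+2) - ∑' n, g n * h (n+2) - ∑' n, g (n+2) * h (n+2) := by
    rw [← tsum_mul_left, ← Summable.tsum_sub ((sm 1 2).mul_left 2) sm02,
      ← Summable.tsum_sub (((sm 1 2).mul_left 2).sub sm02) (sm 2 2)]
    exact tsum_congr (fun n => by ring)
  have sD : Summable (fun n => g n + g (n+2) - 2 * g (n+1)) :=
    (hg.add (sg 2)).sub ((sg 1).mul_left 2)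
  have eD : ∑' n, (g n + g (n+2) - 2 * g (n+1)) = g 0 - g 1 := by
    rw [Summable.tsum_sub (hg.add (sg 2)) ((sg 1).mul_left 2), Summable.tsum_add hg (sg 2),
      tsum_mul_left, eG1, eG2]
    ring
  have bR : |R| ≤ g 0 - g 1 := by
    rw [← eD, ← Real.norm_eq_abs]
    refine tsum_of_norm_bounded sD.hasSum (fun n => ?_)
    rw [norm_mul, Real.norm_eq_abs, Real.norm_eq_abs,
      show |2 * g (n+1) - g n - g (n+2)| = g n + g (n+2) - 2 * g (n+1) by
        rw [abs_of_nonpos (by linarith [hc n])]; ring]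
    exact mul_le_of_le_one_left (by linarith [hc n]) (hb _)
  have h0 : h 0 = 1 := by simp [hh]
  have h1 : h 1 = Real.cos θ := by simp [hh]
  have hA : (∑' n, g n * Real.cos (((n:ℝ)+1) * θ)) = ∑' n, g n * h (n+1) :=
    tsum_congr (fun n => by simp [hh])
  have key : (2 - 2 * Real.cos θ) * (∑' n, g n * h (n+1)) + (1 - Real.cos θ) * g 0
      = Real.cos θ * (g 0 - g 1) + R := by
    rw [h0, h1] at eQ
    rw [h1] at eA
    linear_combination -eP + 2 * eA - eQ - eR
  rw [hA, key]
  have hpos : 0 ≤ g 0 - g 1 := (abs_nonneg R).trans bR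
  calc _ ≤ |Real.cos θ * (g 0 - g 1)| + |R| := abs_add_le _ _
    _ ≤ 1 * (g 0 - g 1) + (g 0 - g 1) := by
      rw [abs_mul, abs_of_nonneg hpos]
      exact add_le_add (mul_le_mul_of_nonneg_right (Real.abs_cos_le_one _) hpos) bR
    _ = _ := by ring

lemma T_bound (θ : ℝ) (hθ : Real.cos θ < 1) : ∃ C : ℝ, ∀ s : ℝ, 1 ≤ s →
    |∑' n, gg s n * Real.sin (((n:ℝ)+1) * θ / 2) ^ 2 - π * s / 2| ≤ C := by
  refine ⟨Real.log 4 + Real.log π + Real.log 2 + 2 * Real.log 4 / (2 - 2 * Real.cos θ), fun s hs => ?_⟩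
  have hs0 : 0 < s := by linarith
  have sA : Summable (fun n => gg s n * Real.cos (((n:ℝ)+1) * θ)) := by
    refine Summable.of_norm_bounded (gg_summable s) (fun n => ?_)
    rw [norm_mul, Real.norm_of_nonneg (gg_nonneg _ _)]
    exact mul_le_of_le_one_right (gg_nonneg _ _) (Real.abs_cos_le_one _)
  have e1 : ∑' n, gg s n * Real.sin (((n:ℝ)+1) * θ / 2) ^ 2
      = (1/2) * (∑' n, gg s n - ∑' n, gg s n * Real.cos (((n:ℝ)+1) * θ)) := by
    rw [← Summable.tsum_sub (gg_summable s) sA, ← tsum_mul_left]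
    refine tsum_congr (fun n => ?_)
    rw [Real.sin_sq_eq_half_sub, show 2 * (((n:ℝ)+1) * θ / 2) = ((n:ℝ)+1) * θ by ring]
    ring
  rw [e1, gg_tsum hs0]
  set A := ∑' n, gg s n * Real.cos (((n:ℝ)+1) * θ)
  have hA := cos_sum_bound (gg s) (gg_nonneg s) (gg_summable s) (gg_convex s) θ
  change |(2 - 2 * Real.cos θ) * A + _| ≤ _ at hA
  have hD : gg s 0 - gg s 1 ≤ Real.log 4 := by
    unfold gg
    rw [← Real.log_div (by positivity) (by positivity)]
    refine Real.log_le_log (by positivity) ?_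
    rw [div_le_iff₀ (by positivity)]
    norm_num
    nlinarith [sq_nonneg s]
  have hk : 0 < 2 - 2 * Real.cos θ := by linarith
  have hA2 : |A + gg s 0 / 2| ≤ 2 * Real.log 4 / (2 - 2 * Real.cos θ) := by
    rw [le_div_iff₀ hk]
    calc |A + gg s 0 / 2| * (2 - 2 * Real.cos θ)
        = |(2 - 2 * Real.cos θ) * A + (1 - Real.cos θ) * gg s 0| := by
          rw [← abs_of_pos hk, ← abs_mul, abs_of_pos hk]; congr 1; ring
      _ ≤ _ := by linarith
  have g0lo : 2 * Real.log s ≤ gg s 0 := by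
    unfold gg
    rw [show 2 * Real.log s = Real.log (s^2) by rw [Real.log_pow]; norm_num]
    exact Real.log_le_log (by positivity) (by norm_num)
  have g0hi : gg s 0 ≤ 2 * Real.log s + Real.log 2 := by
    unfold gg
    rw [show 2 * Real.log s = Real.log (s^2) by rw [Real.log_pow]; norm_num,
      ← Real.log_mul (by positivity) (by norm_num)]
    exact Real.log_le_log (by positivity) (by norm_num; nlinarith)
  have hL := log_sinh_bound (x := π * s) (by nlinarith [Real.pi_gt_three])
  have lm : Real.log (π * s) = Real.log π + Real.log s := Real.log_mul Real.pi_pos.ne' hs0.ne'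
  have lpi : 0 ≤ Real.log π := Real.log_nonneg (by linarith [Real.pi_gt_three])
  have l2 : 0 ≤ Real.log 2 := Real.log_nonneg (by norm_num)
  have l4 : 0 ≤ Real.log 4 := Real.log_nonneg (by norm_num)
  have hq : 0 ≤ 2 * Real.log 4 / (2 - 2 * Real.cos θ) := by positivity
  rw [lm]
  rw [abs_le] at hA2 hL ⊢
  constructor <;> linarith [hA2.1, hA2.2, hL.1, hL.2]

/-- argument of the digamma function -/
noncomputable def YY (B d z : ℝ) (n : ℕ) : ℝ :=
  (|B| - z + (π * ((n : ℝ) + 1) / d) ^ 2) / (2 * |B|)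

/-- basic coefficient -/
noncomputable def xx (B d : ℝ) : ℝ := (π / d) ^ 2 / (2 * |B|)

lemma xx_pos {B d : ℝ} (hB : B ≠ 0) (hd : 0 < d) : 0 < xx B d := by
  have := abs_pos.2 hB
  unfold xx; positivity

lemma YY_eq {B d : ℝ} (hB : B ≠ 0) (z : ℝ) (n : ℕ) :
    YY B d z n = (|B| - z) / (2 * |B|) + xx B d * ((n:ℝ) + 1) ^ 2 := by
  have := (abs_pos.2 hB).ne'
  unfold YY xx
  rw [add_div]; congr 1
  ring

lemma mag_eq {B d : ℝ} (z : ℝ) (n : ℕ) :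
    magTerm B d z n = Real.log (xx B d * ((n:ℝ) + 1) ^ 2) - digamma (YY B d z n) := by
  unfold magTerm YY xx
  congr 2
  ring

lemma YY_lower {B d z : ℝ} (hB : B ≠ 0) (hd : 0 < d) (hz : z < |B| + (π / d) ^ 2) :
    ∃ δ : ℝ, 0 < δ ∧ ∀ n : ℕ, δ * ((n:ℝ) + 1) ^ 2 ≤ YY B d z n := by
  have hx := xx_pos hB hd
  have hβ := abs_pos.2 hB
  have h0 : 0 < (|B| - z) / (2 * |B|) + xx B d := by
    unfold xx; rw [← add_div]; apply div_pos <;> linarith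
  refine ⟨min (xx B d) ((|B| - z) / (2 * |B|) + xx B d), lt_min hx h0, fun n => ?_⟩
  rw [YY_eq hB]
  set a := (|B| - z) / (2 * |B|)
  have hn : 1 ≤ ((n:ℝ) + 1) ^ 2 := by
    have : (0:ℝ) ≤ n := Nat.cast_nonneg n
    nlinarith
  rcases le_total 0 a with ha | ha
  · have := mul_le_mul_of_nonneg_right (min_le_left (xx B d) (a + xx B d)) (by linarith : 0 ≤ ((n:ℝ) + 1) ^ 2)
    linarith
  · have := mul_le_mul_of_nonneg_right (min_le_right (xx B d) (a + xx B d)) (by linarith : 0 ≤ ((n:ℝ) + 1) ^ 2)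
    nlinarith

lemma YY_pos {B d z : ℝ} (hB : B ≠ 0) (hd : 0 < d) (hz : z < |B| + (π / d) ^ 2) (n : ℕ) :
    0 < YY B d z n := by
  obtain ⟨δ, h, h2⟩ := YY_lower hB hd hz
  exact lt_of_lt_of_le (by positivity) (h2 n)

lemma log_sub_log_le {x y : ℝ} (hx : 0 < x) (hy : 0 < y) :
    Real.log x - Real.log y ≤ (x - y) / y := by
  rw [← Real.log_div hx.ne' hy.ne', sub_div, div_self hy.ne']
  exact Real.log_le_sub_one_of_pos (div_pos hx hy)

lemma mag_summable {B d z : ℝ} (hB : B ≠ 0) (hd : 0 < d) (hz : z < |B| + (π / d) ^ 2) :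
    Summable (fun n => |magTerm B d z n|) := by
  obtain ⟨δ, hδ, h⟩ := YY_lower hB hd hz
  have hx := xx_pos hB hd
  set a := (|B| - z) / (2 * |B|) with ha
  refine Summable.of_nonneg_of_le (fun n => abs_nonneg _) (fun n => ?_)
    (summable_inv_sq.mul_left (|a| * (1 / xx B d) + |a| * (1 / δ) + 1 / δ))
  rw [mag_eq]
  have hn : 0 < ((n:ℝ) + 1) ^ 2 := by positivity
  have hY := YY_pos hB hd hz n
  have hX : 0 < xx B d * ((n:ℝ) + 1) ^ 2 := by positivity
  have h1 := dig_le_log hY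
  have h2 := log_le_dig hY
  have hYe := YY_eq (d := d) hB z n
  have hYi : 1 / YY B d z n ≤ 1 / δ * (1 / ((n:ℝ) + 1) ^ 2) := by
    rw [one_div_mul_one_div]
    exact one_div_le_one_div_of_le (by positivity) (h n)
  have hXi : 1 / (xx B d * ((n:ℝ) + 1) ^ 2) = 1 / xx B d * (1 / ((n:ℝ) + 1) ^ 2) := by
    rw [one_div_mul_one_div]
  have l1 := log_sub_log_le hX hY
  have l2 := log_sub_log_le hY hX
  set X := xx B d * ((n:ℝ) + 1) ^ 2
  set Y := YY B d z n
  have hYX : Y - X = a := by rw [hYe]; ring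
  have l1' : Real.log X - Real.log Y ≤ |a| * (1 / Y) := by
    refine l1.trans ?_
    rw [div_eq_mul_one_div]
    exact mul_le_mul_of_nonneg_right (by rw [← neg_sub, hYX]; exact neg_le_abs a) (by positivity)
  have l2' : Real.log Y - Real.log X ≤ |a| * (1 / X) := by
    refine l2.trans ?_
    rw [div_eq_mul_one_div, hYX]
    exact mul_le_mul_of_nonneg_right (le_abs_self a) (by positivity)
  have l3 := mul_le_mul_of_nonneg_left hYi (abs_nonneg a)
  rw [hXi] at l2'
  have p1 : 0 ≤ |a| * (1 / δ * (1 / ((n:ℝ) + 1) ^ 2)) := by positivity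
  have p2 : 0 ≤ |a| * (1 / xx B d * (1 / ((n:ℝ) + 1) ^ 2)) := by positivity
  have p3 : 0 ≤ 1 / δ * (1 / ((n:ℝ) + 1) ^ 2) := by positivity
  rw [abs_le]
  constructor <;> linarith

/-- the weighted terms -/
noncomputable def tw (B d b z : ℝ) (n : ℕ) : ℝ :=
  magTerm B d z n * Real.sin (π * ((n : ℝ) + 1) * b / d) ^ 2

lemma mul_sin_le (t x : ℝ) : |t * Real.sin x ^ 2| ≤ |t| := by
  rw [abs_mul, abs_of_nonneg (sq_nonneg (Real.sin x))]
  exact mul_le_of_le_one_right (abs_nonneg _) (Real.sin_sq_le_one x)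

lemma tw_summable {B d b z : ℝ} (hB : B ≠ 0) (hd : 0 < d) (hz : z < |B| + (π / d) ^ 2) :
    Summable (tw B d b z) :=
  Summable.of_norm_bounded (mag_summable hB hd hz) (fun _ => mul_sin_le _ _)

lemma YY_lt {B d z z' : ℝ} (hB : B ≠ 0) (h : z < z') (n : ℕ) : YY B d z' n < YY B d z n := by
  have := abs_pos.2 hB
  unfold YY
  apply div_lt_div_of_pos_right _ (by positivity)
  linarith

lemma mag_lt {B d z z' : ℝ} (hB : B ≠ 0) (hd : 0 < d) (hz : z' < |B| + (π / d) ^ 2)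
    (h : z < z') (n : ℕ) : magTerm B d z n < magTerm B d z' n := by
  rw [mag_eq, mag_eq]
  have := dig_strict (YY_pos hB hd hz n) (YY_lt (d := d) hB h n)
  linarith

lemma tw_le {B d b z z' : ℝ} (hB : B ≠ 0) (hd : 0 < d) (hz : z' < |B| + (π / d) ^ 2)
    (h : z ≤ z') (n : ℕ) : tw B d b z n ≤ tw B d b z' n := by
  rcases h.eq_or_lt with rfl | h
  · exact le_rfl
  · exact mul_le_mul_of_nonneg_right (mag_lt hB hd hz h n).le (sq_nonneg _)

lemma sin0_pos {d b : ℝ} (hb0 : 0 < b) (hbd : b < d) : 0 < Real.sin (π * b / d) := by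
  have hd : 0 < d := hb0.trans hbd
  apply Real.sin_pos_of_pos_of_lt_pi (by positivity)
  rw [div_lt_iff₀ hd]
  exact mul_lt_mul_of_pos_left hbd Real.pi_pos

/-- the series -/
noncomputable def SS (B d b z : ℝ) : ℝ := ∑' n, tw B d b z n

lemma SS_strict {B d b z z' : ℝ} (hB : B ≠ 0) (hb0 : 0 < b) (hbd : b < d)
    (hz : z' < |B| + (π / d) ^ 2) (h : z < z') : SS B d b z < SS B d b z' := by
  have hd : 0 < d := hb0.trans hbd
  refine Summable.tsum_lt_tsum (i := 0) (fun n => tw_le hB hd hz h.le n) ?_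
    (tw_summable hB hd (h.trans hz)) (tw_summable hB hd hz)
  unfold tw
  refine mul_lt_mul_of_pos_right (mag_lt hB hd hz h 0) ?_
  have := sin0_pos hb0 hbd
  simp only [Nat.cast_zero, zero_add, mul_one]
  positivity

lemma SS_cont {B d b z₁ z₂ : ℝ} (hB : B ≠ 0) (hd : 0 < d)
    (hz : z₂ < |B| + (π / d) ^ 2) : ContinuousOn (SS B d b) (Set.Icc z₁ z₂) := by
  rcases lt_or_ge z₂ z₁ with h12 | h12
  · rw [Set.Icc_eq_empty (not_le.2 h12)]; exact continuousOn_empty _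
  have s1 := (tw_summable (b := b) hB hd (h12.trans_lt hz)).abs
  have s2 := (tw_summable (b := b) hB hd hz).abs
  refine continuousOn_tsum (f := fun n z => tw B d b z n) (fun n => ?_) (s1.add s2) ?_
  · intro z hz'
    apply ContinuousAt.continuousWithinAt
    have hzz : z < |B| + (π / d) ^ 2 := hz'.2.trans_lt hz
    have hY : ContinuousAt (fun z => YY B d z n) z := by
      unfold YY; fun_prop
    have hc : ContinuousAt (fun z => digamma (YY B d z n)) z :=
      ContinuousAt.comp (f := fun z => YY B d z n) (g := digamma)
        (dig_cont (YY_pos hB hd hzz n)) hY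
    unfold tw
    simp_rw [mag_eq]
    exact (continuousAt_const.sub hc).mul continuousAt_const
  · intro n z hz'
    have a1 := tw_le (b := b) hB hd (hz'.2.trans_lt hz) hz'.1 n
    have a2 := tw_le (b := b) hB hd hz hz'.2 n
    rw [Real.norm_eq_abs, abs_le]
    constructor
    · linarith [neg_abs_le (tw B d b z₁ n), abs_nonneg (tw B d b z₂ n)]
    · linarith [le_abs_self (tw B d b z₂ n), abs_nonneg (tw B d b z₁ n)]

lemma SS_large {B d b : ℝ} (hB : B ≠ 0) (hb0 : 0 < b) (hbd : b < d) (M : ℝ) :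
    ∃ z, z < |B| + (π / d) ^ 2 ∧ M ≤ SS B d b z := by
  have hd : 0 < d := hb0.trans hbd
  have hβ := abs_pos.2 hB
  set z₁ := |B| + (π / d) ^ 2 - 2 * |B| with hz₁
  have h1 : z₁ < |B| + (π / d) ^ 2 := by linarith
  have hw : 0 < Real.sin (π * b / d) ^ 2 := pow_pos (sin0_pos hb0 hbd) 2
  set w := Real.sin (π * b / d) ^ 2
  have tw0 : ∀ z, tw B d b z 0 = magTerm B d z 0 * w := fun z => by
    unfold tw; simp [w]
  set K := (|M| + |SS B d b z₁| + |tw B d b z₁ 0|) / w + |Real.log (xx B d)| + Real.log 2 + 1 with hK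
  have l2 : 0 ≤ Real.log 2 := Real.log_nonneg (by norm_num)
  have hK1 : 1 ≤ K := by
    have : 0 ≤ (|M| + |SS B d b z₁| + |tw B d b z₁ 0|) / w := by positivity
    have := abs_nonneg (Real.log (xx B d))
    linarith
  have hK0 : 0 < K := by linarith
  have hKi : 1 / K ≤ 1 := by rw [div_le_one hK0]; exact hK1
  have hKp : 0 < 1 / K := by positivity
  refine ⟨|B| + (π / d) ^ 2 - 2 * |B| * (1 / K), by nlinarith, ?_⟩
  set z := |B| + (π / d) ^ 2 - 2 * |B| * (1 / K) with hz
  have hzb : z < |B| + (π / d) ^ 2 := by nlinarith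
  have hzz : z₁ ≤ z := by nlinarith
  have hY : YY B d z 0 = 1 / K := by
    unfold YY
    rw [hz]
    field_simp
    simp
    field_simp
    ring
  have hm : K - Real.log 2 - |Real.log (xx B d)| ≤ magTerm B d z 0 := by
    rw [mag_eq, hY]
    have e := dig_add_one hKp
    have e2 := dig_le_log (by linarith : 0 < 1 / K + 1)
    have e3 : Real.log (1 / K + 1) ≤ Real.log 2 := Real.log_le_log (by linarith) (by linarith)
    rw [one_div_one_div] at e
    simp only [Nat.cast_zero, zero_add, one_pow, mul_one]
    linarith [neg_abs_le (Real.log (xx B d))]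
  have hsum : SS B d b z₁ - tw B d b z₁ 0 ≤ SS B d b z - tw B d b z 0 := by
    have q1 := (tw_summable (b := b) hB hd h1)
    have q2 := (tw_summable (b := b) hB hd hzb)
    unfold SS
    rw [q1.tsum_eq_zero_add, q2.tsum_eq_zero_add, add_sub_cancel_left, add_sub_cancel_left]
    exact Summable.tsum_le_tsum (fun n => tw_le hB hd hzb hzz _)
      ((summable_nat_add_iff 1).2 q1) ((summable_nat_add_iff 1).2 q2)
  have hm2 : |M| + |SS B d b z₁| + |tw B d b z₁ 0| ≤ tw B d b z 0 := by
    rw [tw0 z, ← div_le_iff₀ hw]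
    linarith
  linarith [le_abs_self M, neg_abs_le (SS B d b z₁), le_abs_self (tw B d b z₁ 0)]

lemma SS_asymp {B d b : ℝ} (hB : B ≠ 0) (hb0 : 0 < b) (hbd : b < d) :
    ∃ C : ℝ, ∀ k : ℝ, π / d ≤ k → |SS B d b (-k^2) + d * k / 2| ≤ C := by
  have hd : 0 < d := hb0.trans hbd
  have hβ := abs_pos.2 hB
  have hx := xx_pos hB hd
  have hcos : Real.cos (2 * (π * b / d)) < 1 := by
    rw [Real.cos_two_mul, Real.cos_sq']
    have := pow_pos (sin0_pos hb0 hbd) 2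
    linarith
  obtain ⟨C, hC⟩ := T_bound (2 * (π * b / d)) hcos
  refine ⟨C + ∑' n : ℕ, 2 / xx B d * (1 / ((n:ℝ) + 1) ^ 2), fun k hk => ?_⟩
  have hk0 : 0 < k := lt_of_lt_of_le (by positivity) hk
  have hzb : -k^2 < |B| + (π / d) ^ 2 := by nlinarith [sq_nonneg k, sq_nonneg (π / d)]
  have hs : 1 ≤ k * d / π := by
    rw [le_div_iff₀ Real.pi_pos, one_mul]
    rwa [div_le_iff₀ hd] at hk
  have hT := hC _ hs
  set s := k * d / π with hsd
  have hps : π * s / 2 = d * k / 2 := by rw [hsd]; field_simp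
  rw [hps] at hT
  have ew : ∀ n : ℕ, ((n:ℝ) + 1) * (2 * (π * b / d)) / 2 = π * ((n:ℝ) + 1) * b / d := fun n => by ring
  simp_rw [ew] at hT
  have sgw : Summable (fun n => gg s n * Real.sin (π * ((n : ℝ) + 1) * b / d) ^ 2) := by
    refine Summable.of_norm_bounded (gg_summable s) (fun n => ?_)
    refine (mul_sin_le _ _).trans ?_
    rw [abs_of_nonneg (gg_nonneg _ _)]
  have st := tw_summable (b := b) hB hd hzb
  have hE : |SS B d b (-k^2) + ∑' n, gg s n * Real.sin (π * ((n : ℝ) + 1) * b / d) ^ 2|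
      ≤ ∑' n : ℕ, 2 / xx B d * (1 / ((n:ℝ) + 1) ^ 2) := by
    unfold SS
    rw [← Summable.tsum_add st sgw, ← Real.norm_eq_abs]
    refine tsum_of_norm_bounded (summable_inv_sq.mul_left _).hasSum (fun n => ?_)
    unfold tw
    rw [← add_mul]
    refine (mul_sin_le _ _).trans ?_
    rw [mag_eq]
    have hX : 0 < xx B d * ((n:ℝ) + 1) ^ 2 := by positivity
    have hY := YY_pos hB hd hzb n
    have hYe : YY B d (-k^2) n = 1 / 2 + k^2 / (2 * |B|) + xx B d * ((n:ℝ) + 1) ^ 2 := by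
      rw [YY_eq hB]; field_simp; ring
    have hg : gg s n = Real.log (k^2 / (2 * |B|) + xx B d * ((n:ℝ) + 1) ^ 2)
        - Real.log (xx B d * ((n:ℝ) + 1) ^ 2) := by
      unfold gg
      rw [← Real.log_div (by positivity) hX.ne']
      congr 1
      rw [hsd]; unfold xx
      field_simp
      ring
    have hc : 0 ≤ k^2 / (2 * |B|) := by positivity
    have hr : 2 / xx B d * (1 / ((n:ℝ) + 1) ^ 2) = 2 * (1 / (xx B d * ((n:ℝ) + 1) ^ 2)) := by
      field_simp
    rw [hg, hr]
    have h1 := dig_le_log hY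
    have h2 := log_le_dig hY
    set X := xx B d * ((n:ℝ) + 1) ^ 2
    set Y := YY B d (-k^2) n
    set c := k^2 / (2 * |B|)
    have hU : 0 < c + X := by linarith
    have l1 := log_sub_log_le hY hU
    have l2 : Real.log (c + X) ≤ Real.log Y := Real.log_le_log hU (by rw [hYe]; linarith)
    have i1 : 1 / Y ≤ 1 / X := one_div_le_one_div_of_le hX (by rw [hYe]; linarith)
    have i2 : (Y - (c + X)) / (c + X) ≤ 1 / X := by
      rw [hYe]
      exact div_le_div₀ (by norm_num) (by linarith) hX (by linarith)
    have i3 : 0 < 1 / X := by positivity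
    rw [abs_le]
    constructor <;> linarith
  rw [abs_le] at hT hE ⊢
  constructor <;> linarith [hT.1, hT.2, hE.1, hE.2]

lemma xiB_eq (B d b z : ℝ) : xiB B d b z = (1 / (2 * π * d)) * SS B d b z + (1 / (4 * π * d)) *
      (Real.eulerMascheroniConstant + digamma (b / d) + (π / 2) * Real.cot (π * b / d)) := rfl

lemma xiB_asymp {B d b : ℝ} (hB : B ≠ 0) (hb0 : 0 < b) (hbd : b < d) :
    ∃ C : ℝ, 0 ≤ C ∧ ∀ k : ℝ, π / d ≤ k → |4 * π * xiB B d b (-k^2) + k| ≤ C := by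
  have hd : 0 < d := hb0.trans hbd
  obtain ⟨C, hC⟩ := SS_asymp hB hb0 hbd
  set e := Real.eulerMascheroniConstant + digamma (b / d) + (π / 2) * Real.cot (π * b / d) with he
  have hC0 : 0 ≤ C := (abs_nonneg _).trans (hC _ le_rfl)
  refine ⟨2 / d * C + |1 / d * e|, by positivity, fun k hk => ?_⟩
  have h := hC k hk
  have e1 : 4 * π * xiB B d b (-k^2) + k = 2 / d * (SS B d b (-k^2) + d * k / 2) + 1 / d * e := by
    rw [xiB_eq, ← he]
    field_simp
    ring
  rw [e1]
  refine (abs_add_le _ _).trans (add_le_add ?_ le_rfl)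
  rw [abs_mul, abs_of_pos (by positivity : 0 < 2 / d)]
  exact mul_le_mul_of_nonneg_left h (by positivity)

lemma xiB_strict {B d b z z' : ℝ} (hB : B ≠ 0) (hb0 : 0 < b) (hbd : b < d)
    (hz : z' < |B| + (π / d) ^ 2) (h : z < z') : xiB B d b z < xiB B d b z' := by
  have hd : 0 < d := hb0.trans hbd
  rw [xiB_eq, xiB_eq]
  have := mul_lt_mul_of_pos_left (SS_strict hB hb0 hbd hz h) (by positivity : 0 < 1 / (2 * π * d))
  linarith

lemma xiB_large {B d b : ℝ} (hB : B ≠ 0) (hb0 : 0 < b) (hbd : b < d) (M : ℝ) :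
    ∃ z, z < |B| + (π / d) ^ 2 ∧ M ≤ xiB B d b z := by
  have hd : 0 < d := hb0.trans hbd
  set e := (1 / (4 * π * d)) *
    (Real.eulerMascheroniConstant + digamma (b / d) + (π / 2) * Real.cot (π * b / d)) with he
  obtain ⟨z, hz, h⟩ := SS_large hB hb0 hbd (2 * π * d * (M - e))
  refine ⟨z, hz, ?_⟩
  rw [xiB_eq, ← he]
  have := mul_le_mul_of_nonneg_left h (by positivity : 0 ≤ 1 / (2 * π * d))
  have e2 : 1 / (2 * π * d) * (2 * π * d * (M - e)) = M - e := by field_simp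
  linarith

/-- Strong-coupling asymptotics of the lowest magnetic eigenvalue: for every `α`
there is a unique `z = ε₀(α)` below the bottom `|B| + (π/d)²` of `Σ_B` with
`ξ_B(b,z) = α`, and `ε₀(α) = −16π²α²·(1 + O(α^{−1}))` as `α → −∞`, i.e.
`|ε₀(α) + 16π²α²| ≤ C·|α|` for `α` negative enough; the leading term is
independent of `B`. -/
theorem xiB_lowest_eigenvalue_strong_coupling (B d b : ℝ) (hB : B ≠ 0) (hd : 0 < d)
    (hb0 : 0 < b) (hbd : b < d) :
    (∀ α : ℝ, ∃! z : ℝ, z < |B| + (π / d) ^ 2 ∧ xiB B d b z = α) ∧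
    (∀ ε₀ : ℝ → ℝ, (∀ α : ℝ, ε₀ α < |B| + (π / d) ^ 2 ∧ xiB B d b (ε₀ α) = α) →
      ∃ C α₀ : ℝ, α₀ < 0 ∧ ∀ α : ℝ, α ≤ α₀ →
        |ε₀ α + 16 * π ^ 2 * α ^ 2| ≤ C * |α|) := by
  have hd' : 0 < d := hd
  have hβ := abs_pos.2 hB
  obtain ⟨C, hC0, hC⟩ := xiB_asymp hB hb0 hbd
  have hneg : ∀ k : ℝ, -k^2 < |B| + (π / d) ^ 2 := fun k => by
    nlinarith [sq_nonneg k, sq_nonneg (π / d)]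
  have hpd : 0 < π / d := by positivity
  refine ⟨fun α => ?_, fun ε hε => ?_⟩
  · obtain ⟨z₂, hz₂, h₂⟩ := xiB_large hB hb0 hbd α
    set k := π / d + C + 4 * π * |α| + |z₂| + 1 with hk
    have hpa : 0 ≤ 4 * π * |α| := by positivity
    have hkd : π / d ≤ k := by linarith [abs_nonneg z₂]
    have hk1 : 1 ≤ k := by linarith [abs_nonneg z₂]
    have h₁ : xiB B d b (-k^2) ≤ α := by
      have := (abs_le.1 (hC k hkd)).2
      have h4 : 4 * π * xiB B d b (-k^2) ≤ 4 * π * α := by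
        have : 4 * π * (-|α|) ≤ 4 * π * α :=
          mul_le_mul_of_nonneg_left (neg_abs_le α) (by positivity)
        linarith [abs_nonneg z₂]
      exact le_of_mul_le_mul_left h4 (by positivity)
    have hkz : -k^2 ≤ z₂ := by
      have : |z₂| ≤ k := by linarith
      nlinarith [neg_abs_le z₂]
    have hcont : ContinuousOn (xiB B d b) (Set.Icc (-k^2) z₂) := by
      have := SS_cont (b := b) (z₁ := -k^2) hB hd hz₂
      exact (continuousOn_const.mul this).add continuousOn_const
    obtain ⟨z, hz, hza⟩ := intermediate_value_Icc hkz hcont ⟨h₁, h₂⟩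
    have hzb := hz.2.trans_lt hz₂
    refine ⟨z, ⟨hzb, hza⟩, fun y hy => ?_⟩
    rcases lt_trichotomy y z with h | h | h
    · have := xiB_strict hB hb0 hbd hzb h
      linarith [hy.2]
    · exact h
    · have := xiB_strict hB hb0 hbd hy.1 h
      linarith [hy.2]
  · refine ⟨C * (8 * π + C), min (-1) (xiB B d b (-(π / d)^2) - 1), ?_, fun α hα => ?_⟩
    · exact (min_le_left _ _).trans_lt (by norm_num)
    · have a1 : α ≤ -1 := hα.trans (min_le_left _ _)
      have a2 : α ≤ xiB B d b (-(π / d)^2) - 1 := hα.trans (min_le_right _ _)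
      obtain ⟨hz, hza⟩ := hε α
      have hzl : ε α ≤ -(π / d)^2 := by
        by_contra hcon
        have := xiB_strict hB hb0 hbd hz (not_le.1 hcon)
        linarith
      set k := Real.sqrt (-(ε α)) with hk
      have hk2 : k^2 = -(ε α) := Real.sq_sqrt (by nlinarith)
      have hkd : π / d ≤ k := Real.le_sqrt_of_sq_le (by linarith)
      have hb := hC k hkd
      rw [hk2, neg_neg, hza] at hb
      have hk0 : 0 ≤ k := Real.sqrt_nonneg _
      have e1 : ε α + 16 * π^2 * α^2 = (4 * π * α + k) * (4 * π * α - k) := by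
        linear_combination hk2
      have hA : |α| = -α := abs_of_neg (by linarith)
      have e2 : |4 * π * α - k| ≤ (8 * π + C) * |α| := by
        have h1 := abs_le.1 hb
        have hp := Real.pi_pos
        rw [hA, abs_le]
        constructor <;> nlinarith [h1.1, h1.2]
      rw [e1, abs_mul, mul_assoc C]
      exact mul_le_mul hb e2 (abs_nonneg _) hC0
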